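/- arXiv:1512.06460 — 6 statements merged into one kernel-verified Lean document; each statement's English description precedes it below -/
import Mathlib

section
/- Let k ≥ 1, let 0 < c₀ < 1, and let A : E → ℝ be a C² function on the k-dimensional Euclidean space E such that for every u in the closed unit ball B̄ and every v ∈ E one has D²A(u)(v,v) ≤ -c₀·‖v‖². Suppose m ∈ B̄ satisfies ∇A(m) = 0 and ‖m‖ ≤ c₀/√10. Then for every u ∈ E with ‖u‖ = 1 one has A(u) < A(m) - c₀/5; in particular the supremum of A over the unit sphere is strictly less than the maximum of A over B̄ minus c₀/5. -/
/-!
Along the segment from the critical point `m` to a unit vector `u`, Taylor's formula with integral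
remainder has no first-order term, so the Hessian bound gives `A u ≤ A m - c₀ / 2 * ‖u - m‖ ^ 2`.
Since `3 < √10`, the critical point has norm at most `1 / 3`; hence `2 / 3 ≤ ‖u - m‖`, and the drop
is at least `2 / 9 * c₀ > c₀ / 5`.
-/

lemma continuousOn_iteratedFDeriv_add_smul {𝕜 E F : Type*} [NontriviallyNormedField 𝕜]
    [NormedAddCommGroup E] [NormedSpace 𝕜 E] [NormedAddCommGroup F] [NormedSpace 𝕜 F]
    {f : E → F} {x y : E} {n : ℕ} {s : Set 𝕜} (hf : ∀ t ∈ s, ContDiffAt 𝕜 n f (x + t • y)) :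
    ContinuousOn (fun t : 𝕜 ↦ iteratedFDeriv 𝕜 n f (x + t • y) fun _ ↦ y) s := by
  intro t ht
  have hcont : ContinuousAt (iteratedFDeriv 𝕜 n f) (x + t • y) :=
    ((hf t ht).iteratedFDeriv_right (m := 0) (by simp)).continuousAt
  exact (hcont.comp (x := t) (by fun_prop)).continuousWithinAt.eval_const _

lemma integral_one_sub_pow (n : ℕ) : ∫ t in (0 : ℝ)..1, (1 - t) ^ n = 1 / (n + 1) := by
  simp [intervalIntegral.integral_comp_sub_left (fun t : ℝ ↦ t ^ n)]

section Taylor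

open Set
open scoped Nat

variable {E : Type*} [NormedAddCommGroup E] [NormedSpace ℝ E] {f : E → ℝ} {x y : E} {C : ℝ}

lemma map_add_le_sum_add_of_iteratedFDeriv_le {n : ℕ}
    (hf : ∀ t ∈ Icc (0 : ℝ) 1, ContDiffAt ℝ (n + 1) f (x + t • y))
    (hC : ∀ t ∈ Icc (0 : ℝ) 1, iteratedFDeriv ℝ (n + 1) f (x + t • y) (fun _ ↦ y) ≤ C) :
    f (x + y) ≤ ∑ k ∈ Finset.range (n + 1), (k ! : ℝ)⁻¹ * iteratedFDeriv ℝ k f x (fun _ ↦ y) +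
      C / (n + 1)! := by
  have hcont : ContinuousOn (fun t : ℝ ↦ iteratedFDeriv ℝ (n + 1) f (x + t • y) fun _ ↦ y)
      (Icc 0 1) :=
    continuousOn_iteratedFDeriv_add_smul (by exact_mod_cast hf)
  have hremainder :
      ∫ t in (0 : ℝ)..1, (1 - t) ^ n * iteratedFDeriv ℝ (n + 1) f (x + t • y) (fun _ ↦ y) ≤
        C / (n + 1) :=
    calc
      _ ≤ ∫ t in (0 : ℝ)..1, (1 - t) ^ n * C := by
        refine intervalIntegral.integral_mono_on zero_le_one
          (ContinuousOn.intervalIntegrable_of_Icc zero_le_one (by fun_prop))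
          (Continuous.intervalIntegrable (by fun_prop) _ _) fun t ht ↦ ?_
        exact mul_le_mul_of_nonneg_left (hC t ht) (pow_nonneg (sub_nonneg.2 ht.2) n)
      _ = C / (n + 1) := by
        rw [intervalIntegral.integral_mul_const, integral_one_sub_pow, one_div_mul_eq_div]
  rw [map_add_eq_sum_add_integral_iteratedFDeriv hf]
  simp only [smul_eq_mul]
  gcongr
  calc
    _ ≤ (n ! : ℝ)⁻¹ * (C / (n + 1)) := by gcongr
    _ = C / (n + 1)! := by
      rw [Nat.factorial_succ]
      push_cast
      field_simp

lemma le_add_fderiv_add_of_iteratedFDeriv_two_le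
    (hf : ∀ z ∈ segment ℝ x y, ContDiffAt ℝ 2 f z)
    (hC : ∀ z ∈ segment ℝ x y, iteratedFDeriv ℝ 2 f z ![y - x, y - x] ≤ C) :
    f y ≤ f x + fderiv ℝ f x (y - x) + C / 2 := by
  have hmem : ∀ t ∈ Icc (0 : ℝ) 1, x + t • (y - x) ∈ segment ℝ x y := fun t ht ↦
    segment_eq_image' ℝ x y ▸ mem_image_of_mem _ ht
  have hdiag : ![y - x, y - x] = fun _ ↦ y - x := by ext i; fin_cases i <;> rfl
  have htaylor := map_add_le_sum_add_of_iteratedFDeriv_le (n := 1)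
    (fun t ht ↦ by exact_mod_cast hf _ (hmem t ht))
    (fun t ht ↦ hdiag ▸ hC _ (hmem t ht))
  simpa [Finset.sum_range_succ] using htaylor

end Taylor

lemma gradient_eq_zero_iff {𝕜 F : Type*} [RCLike 𝕜] [NormedAddCommGroup F]
    [InnerProductSpace 𝕜 F] [CompleteSpace F] {f : F → 𝕜} {x : F} :
    gradient f x = 0 ↔ fderiv 𝕜 f x = 0 := by
  simp [gradient]

theorem stmt_2_general {E : Type*} [NormedAddCommGroup E] [NormedSpace ℝ E] {A : E → ℝ} {c₀ : ℝ}
    (hc₀ : 0 < c₀) (hA : ∀ u ∈ Metric.closedBall (0 : E) 1, ContDiffAt ℝ 2 A u)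
    (hHess : ∀ u ∈ Metric.closedBall (0 : E) 1, ∀ v : E,
      iteratedFDeriv ℝ 2 A u ![v, v] ≤ -c₀ * ‖v‖ ^ 2)
    {m : E} (hcrit : fderiv ℝ A m = 0) (hm : ‖m‖ ≤ 1 / 3) {u : E} (hu : ‖u‖ = 1) :
    A u < A m - c₀ / 5 := by
  have hsegment : segment ℝ m u ⊆ Metric.closedBall 0 1 :=
    (convex_closedBall 0 1).segment_subset (mem_closedBall_zero_iff.2 (by linarith))
      (mem_closedBall_zero_iff.2 hu.le)
  have htaylor : A u ≤ A m + fderiv ℝ A m (u - m) + -c₀ * ‖u - m‖ ^ 2 / 2 :=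
    le_add_fderiv_add_of_iteratedFDeriv_two_le (fun z hz ↦ hA z (hsegment hz))
      fun z hz ↦ hHess z (hsegment hz) (u - m)
  have hdist : 2 / 3 ≤ ‖u - m‖ := by linarith [norm_sub_norm_le u m]
  have hdist_sq : (2 / 3) ^ 2 ≤ ‖u - m‖ ^ 2 := by gcongr
  calc
    A u ≤ A m - c₀ / 2 * ‖u - m‖ ^ 2 := by
      rw [hcrit, zero_apply] at htaylor
      linarith
    _ ≤ A m - c₀ / 2 * (2 / 3) ^ 2 := by gcongr
    _ < A m - c₀ / 5 := by linarith

lemma div_sqrt_ten_le_one_third {c : ℝ} (hc : c ≤ 1) : c / √10 ≤ 1 / 3 := by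
  have hsqrt : 3 ≤ √10 := Real.le_sqrt_of_sq_le (by norm_num)
  gcongr

/-- Boundary estimate from the proof of Lemma 4.5: if the Hessian of `A` is bounded
above by `-c₀·Id` on the closed unit ball and the critical point `m` satisfies
`‖m‖ ≤ c₀/√10`, then `A(u) < A(m) - c₀/5` for every unit vector `u`. -/
theorem stmt_2 (k : ℕ) (hk : 1 ≤ k) (c₀ : ℝ) (hc₀ : 0 < c₀) (hc₀' : c₀ < 1)
    (A : EuclideanSpace ℝ (Fin k) → ℝ) (hA : ContDiff ℝ 2 A)
    (hHess : ∀ u ∈ Metric.closedBall (0 : EuclideanSpace ℝ (Fin k)) 1,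
      ∀ v : EuclideanSpace ℝ (Fin k),
        iteratedFDeriv ℝ 2 A u ![v, v] ≤ -c₀ * ‖v‖ ^ 2)
    (m : EuclideanSpace ℝ (Fin k))
    (hm : m ∈ Metric.closedBall (0 : EuclideanSpace ℝ (Fin k)) 1)
    (hgrad : gradient A m = 0)
    (hmsmall : ‖m‖ ≤ c₀ / Real.sqrt 10) :
    ∀ u : EuclideanSpace ℝ (Fin k), ‖u‖ = 1 → A u < A m - c₀ / 5 := fun _ hu ↦
  stmt_2_general hc₀ (fun _ _ ↦ hA.contDiffAt) hHess (gradient_eq_zero_iff.1 hgrad)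
    (hmsmall.trans (div_sqrt_ten_le_one_third hc₀'.le)) hu
end

section
/- Let k ≥ 1, let 0 < c₀ < 1, and let A : E → ℝ be a C² function on the k-dimensional Euclidean space E such that for every u in the closed unit ball B̄ and every v ∈ E one has D²A(u)(v,v) ≥ -(1/c₀)·‖v‖². Suppose m ∈ B̄ satisfies ∇A(m) = 0 and ‖m‖ ≤ c₀/√10. Then every w ∈ E with ‖w‖ ≤ c₀/4 satisfies A(w) > A(m) - c₀/5. -/
/-!
Taylor's formula with Lagrange remainder along the segment from the critical point `m` to `w` has no
linear term, so the Hessian bound gives `A w ≥ A m - ‖w - m‖² / (2 c₀)`. Moreover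
`‖w - m‖² ≤ 2 (‖w‖² + ‖m‖²) ≤ 2 (1/16 + 1/10) c₀² < (2/5) c₀²`.
-/

open AffineMap Set

section LineMap

variable {𝕜 E F : Type*} [NontriviallyNormedField 𝕜] [NormedAddCommGroup E] [NormedSpace 𝕜 E]
  [NormedAddCommGroup F] [NormedSpace 𝕜 F] {f : E → F} {x y : E} {t : 𝕜}

lemma deriv_comp_lineMap (hf : DifferentiableAt 𝕜 f (lineMap x y t)) :
    deriv (fun s : 𝕜 ↦ f (lineMap x y s)) t = fderiv 𝕜 f (lineMap x y t) (y - x) :=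
  (hf.hasFDerivAt.comp_hasDerivAt t hasDerivAt_lineMap).deriv

lemma iteratedDeriv_two_comp_lineMap (hf : ContDiffAt 𝕜 2 f (lineMap x y t)) :
    iteratedDeriv 2 (fun s : 𝕜 ↦ f (lineMap x y s)) t =
      iteratedFDeriv 𝕜 2 f (lineMap x y t) ![y - x, y - x] := by
  have hline : HasDerivAt (lineMap x y) (y - x) t := hasDerivAt_lineMap
  have hderiv : deriv (fun s : 𝕜 ↦ f (lineMap x y s)) =ᶠ[nhds t]
      fun s ↦ fderiv 𝕜 f (lineMap x y s) (y - x) := by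
    filter_upwards [hline.continuousAt.eventually (hf.eventually (by simp))] with s hs
    exact deriv_comp_lineMap (hs.differentiableAt (by simp))
  have hfderiv : DifferentiableAt 𝕜 (fderiv 𝕜 f) (lineMap x y t) :=
    (hf.fderiv_right (m := 1) (by norm_num)).differentiableAt (by simp)
  have hderiv₂ := (hfderiv.hasFDerivAt.comp_hasDerivAt t hline).clm_apply
    (hasDerivAt_const t (y - x))
  rw [iteratedDeriv_succ, iteratedDeriv_one, hderiv.deriv_eq, iteratedFDeriv_two_apply]
  simpa using hderiv₂.deriv

end LineMap

section Taylor

variable {E : Type*} [NormedAddCommGroup E] [NormedSpace ℝ E] {f : E → ℝ} {x y : E}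

lemma exists_mem_openSegment_taylor_two (hf : ∀ u ∈ segment ℝ x y, ContDiffAt ℝ 2 f u) :
    ∃ u ∈ openSegment ℝ x y,
      f y = f x + fderiv ℝ f x (y - x) + iteratedFDeriv ℝ 2 f u ![y - x, y - x] / 2 := by
  let g : ℝ → ℝ := fun t ↦ f (lineMap x y t)
  have hsmooth : ∀ t ∈ Icc (0 : ℝ) 1, ContDiffAt ℝ 2 f (lineMap x y t) := fun t ht ↦
    hf _ (segment_eq_image_lineMap ℝ x y ▸ mem_image_of_mem _ ht)
  have hgsmooth : ∀ t ∈ Icc (0 : ℝ) 1, ContDiffAt ℝ 2 g t := fun t ht ↦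
    (hsmooth t ht).comp t (by fun_prop)
  have h0 : (0 : ℝ) ∈ Icc (0 : ℝ) 1 := left_mem_Icc.2 zero_le_one
  have hgderiv : derivWithin g (Icc 0 1) 0 = fderiv ℝ f x (y - x) := by
    rw [((hgsmooth 0 h0).differentiableAt (by simp)).derivWithin
      (uniqueDiffOn_Icc zero_lt_one 0 h0),
      deriv_comp_lineMap ((hsmooth 0 h0).differentiableAt (by simp)), lineMap_apply_zero]
  obtain ⟨t, ht, htaylor⟩ := taylor_mean_remainder_lagrange_iteratedDeriv (f := g) (n := 1)
    zero_ne_one (uIcc_of_le (zero_le_one' ℝ) ▸ fun t ht ↦ (hgsmooth t ht).contDiffWithinAt)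
  rw [uIoo_of_le zero_le_one] at ht
  refine ⟨lineMap x y t, openSegment_eq_image_lineMap ℝ x y ▸ mem_image_of_mem _ ht, ?_⟩
  have hpoly : taylorWithinEval g 1 (Icc 0 1) 0 1 = f x + fderiv ℝ f x (y - x) := by
    simp [taylorWithinEval_succ, iteratedDerivWithin_one, hgderiv, g]
  have hg1 : g 1 = f y := by simp [g]
  rw [uIcc_of_le zero_le_one, iteratedDeriv_two_comp_lineMap (hsmooth t (Ioo_subset_Icc_self ht)),
    hpoly, hg1, sub_eq_iff_eq_add'] at htaylor
  simpa using htaylor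

lemma add_fderiv_add_le_of_le_iteratedFDeriv_two {s : Set E} {K : ℝ} (hs : Convex ℝ s)
    (hf : ∀ u ∈ s, ContDiffAt ℝ 2 f u)
    (hK : ∀ u ∈ s, ∀ v : E, K * ‖v‖ ^ 2 ≤ iteratedFDeriv ℝ 2 f u ![v, v])
    (hx : x ∈ s) (hy : y ∈ s) :
    f x + fderiv ℝ f x (y - x) + K * ‖y - x‖ ^ 2 / 2 ≤ f y := by
  have hseg : segment ℝ x y ⊆ s := hs.segment_subset hx hy
  obtain ⟨u, hu, htaylor⟩ := exists_mem_openSegment_taylor_two fun u hu ↦ hf u (hseg hu)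
  linarith [hK u (hseg (openSegment_subset_segment ℝ x y hu)) (y - x)]

end Taylor

lemma norm_sub_sq_le_two_mul {E : Type*} [SeminormedAddCommGroup E] (x y : E) :
    ‖x - y‖ ^ 2 ≤ 2 * (‖x‖ ^ 2 + ‖y‖ ^ 2) :=
  calc ‖x - y‖ ^ 2 ≤ (‖x‖ + ‖y‖) ^ 2 := by gcongr; exact norm_sub_le x y
    _ ≤ 2 * (‖x‖ ^ 2 + ‖y‖ ^ 2) := add_sq_le

theorem stmt_3_general {E : Type*} [NormedAddCommGroup E] [NormedSpace ℝ E] {A : E → ℝ}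
    {s : Set E} {c₀ : ℝ} {m w : E} (hs : Convex ℝ s) (hc₀ : 0 < c₀)
    (hA : ∀ u ∈ s, ContDiffAt ℝ 2 A u)
    (hHess : ∀ u ∈ s, ∀ v : E, -(1 / c₀) * ‖v‖ ^ 2 ≤ iteratedFDeriv ℝ 2 A u ![v, v])
    (hm : m ∈ s) (hw : w ∈ s) (hcrit : fderiv ℝ A m = 0)
    (hmsmall : ‖m‖ ≤ c₀ / √10) (hwsmall : ‖w‖ ≤ c₀ / 4) :
    A m - c₀ / 5 < A w := by
  have hquad : A m - ‖w - m‖ ^ 2 / (2 * c₀) ≤ A w := by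
    convert add_fderiv_add_le_of_le_iteratedFDeriv_two hs hA hHess hm hw using 1
    rw [hcrit, zero_apply]
    ring
  have hdist : ‖w - m‖ ^ 2 < 2 / 5 * c₀ ^ 2 :=
    calc ‖w - m‖ ^ 2 ≤ 2 * (‖w‖ ^ 2 + ‖m‖ ^ 2) := norm_sub_sq_le_two_mul w m
      _ ≤ 2 * ((c₀ / 4) ^ 2 + (c₀ / √10) ^ 2) := by gcongr
      _ = 13 / 40 * c₀ ^ 2 := by rw [div_pow c₀ (√10), Real.sq_sqrt (by norm_num)]; ring
      _ < 2 / 5 * c₀ ^ 2 := by gcongr ?_ * _; norm_num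
  have hloss : ‖w - m‖ ^ 2 / (2 * c₀) < c₀ / 5 := by
    rw [div_lt_iff₀ (by positivity)]
    linarith
  linarith

/-- Second inequality of Lemma 4.5: if the Hessian of `A` is bounded below by
`-(1/c₀)·Id` on the closed unit ball and the critical point `m` satisfies
`‖m‖ ≤ c₀/√10`, then `A(w) > A(m) - c₀/5` whenever `‖w‖ ≤ c₀/4`. -/
theorem stmt_3 (k : ℕ) (hk : 1 ≤ k) (c₀ : ℝ) (hc₀ : 0 < c₀) (hc₀' : c₀ < 1)
    (A : EuclideanSpace ℝ (Fin k) → ℝ) (hA : ContDiff ℝ 2 A)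
    (hHess : ∀ u ∈ Metric.closedBall (0 : EuclideanSpace ℝ (Fin k)) 1,
      ∀ v : EuclideanSpace ℝ (Fin k),
        -(1 / c₀) * ‖v‖ ^ 2 ≤ iteratedFDeriv ℝ 2 A u ![v, v])
    (m : EuclideanSpace ℝ (Fin k))
    (hm : m ∈ Metric.closedBall (0 : EuclideanSpace ℝ (Fin k)) 1)
    (hgrad : gradient A m = 0)
    (hmsmall : ‖m‖ ≤ c₀ / Real.sqrt 10) :
    ∀ w : EuclideanSpace ℝ (Fin k), ‖w‖ ≤ c₀ / 4 → A m - c₀ / 5 < A w := by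
  intro w hw
  have hwball : w ∈ Metric.closedBall 0 1 := mem_closedBall_zero_iff.2 (by linarith)
  have hcrit : fderiv ℝ A m = 0 := by rw [← toDual_gradient, hgrad, map_zero]
  exact stmt_3_general (convex_closedBall 0 1) hc₀ (fun _ _ ↦ hA.contDiffAt) hHess hm hwball hcrit
    hmsmall hw
end

section
/- Let k ≥ 1 and let A : E → ℝ be a C² function on the k-dimensional Euclidean space E. For every point v in the closed unit ball B̄ there exists a curve γ : ℝ → E with γ(0) = v such that for every t ≥ 0, γ(t) ∈ B̄ and γ has derivative -(1 - ‖γ(t)‖²)·∇A(γ(t)) at t (i.e., γ is a global-in-forward-time integral curve of the vector field u ↦ -(1 - ‖u‖²)·∇A(u) that remains in the closed unit ball). -/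
/-!
Let `F` be the field `u ↦ -(1 - ‖u‖²) ∇A(u)` on the closed unit ball, extended by `0` to the rest of
the space. Since the factor `1 - ‖u‖²` vanishes on the sphere, and every segment leaving the ball
crosses the sphere, `F` is Lipschitz everywhere. It is also bounded, so it has an integral curve
through `v` for all times. If this curve were outside the ball at some time, it would then be at a
zero of `F`, hence constant by uniqueness, and so it could not start in the ball.
-/

open Set Metric Topology
open scoped NNReal

section IntegralCurves

variable {E : Type*} [NormedAddCommGroup E] [NormedSpace ℝ E]

lemma exists_isIntegralCurve_of_forall_Ioo {f : ℝ → E → E} {K : ℝ≥0}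
    (hf : ∀ t, LipschitzWith K (f t)) {x : E}
    (h : ∀ r > 0, ∃ γ : ℝ → E, γ 0 = x ∧ IsIntegralCurveOn γ f (Ioo (-r) r)) :
    ∃ γ : ℝ → E, γ 0 = x ∧ IsIntegralCurve γ f := by
  choose! α hα_zero hα using h
  have hα_deriv {r t : ℝ} (htr : |t| < r) : HasDerivAt (α r) (f t (α r t)) t :=
    (hα r ((abs_nonneg t).trans_lt htr) t (abs_lt.1 htr)).hasDerivAt
      (Ioo_mem_nhds (abs_lt.1 htr).1 (abs_lt.1 htr).2)
  have hα_agree {r s : ℝ} (hr : 0 < r) (hrs : r ≤ s) : EqOn (α r) (α s) (Ioo (-r) r) :=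
    ODE_solution_unique_of_mem_Ioo (s := fun _ ↦ univ) (t₀ := 0)
      (fun t _ ↦ (hf t).lipschitzOnWith) (by simpa using hr)
      (fun t ht ↦ ⟨hα_deriv (abs_lt.2 ht), mem_univ _⟩)
      (fun t ht ↦ ⟨hα_deriv ((abs_lt.2 ht).trans_le hrs), mem_univ _⟩)
      ((hα_zero r hr).trans (hα_zero s (hr.trans_le hrs)).symm)
  refine ⟨fun t ↦ α (|t| + 1) t, hα_zero _ (by positivity), fun t ↦ ?_⟩
  have h_eq : (fun u ↦ α (|u| + 1) u) =ᶠ[𝓝 t] α (|t| + 2) := by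
    filter_upwards [continuous_abs.continuousAt.eventually_lt_const (lt_add_one |t|)] with u hu
    exact hα_agree (by positivity) (by linarith) (abs_lt.1 (lt_add_one |u|))
  have h_deriv : HasDerivAt (α (|t| + 2)) (f t (α (|t| + 2) t)) t := hα_deriv (by linarith)
  rw [← h_eq.self_of_nhds] at h_deriv
  exact h_deriv.congr_of_eventuallyEq h_eq

-- A curve of speed at most `L` stays within distance `L * r` of its origin up to time `r`.
lemma exists_isIntegralCurveOn_Ioo_of_bounded [CompleteSpace E] {F : E → E} {K L : ℝ≥0}
    (hF : LipschitzWith K F) (hL : ∀ x, ‖F x‖ ≤ L) (x : E) {r : ℝ} (hr : 0 < r) :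
    ∃ γ : ℝ → E, γ 0 = x ∧ IsIntegralCurveOn γ (fun _ ↦ F) (Ioo (-r) r) := by
  have hPL : IsPicardLindelof (fun _ ↦ F) (⟨0, by simp [hr.le]⟩ : Icc (-r) r) x
      (L * r.toNNReal) 0 L K :=
    .of_time_independent (fun y _ ↦ hL y) hF.lipschitzOnWith (by simp [hr.le])
  obtain ⟨γ, hγ_zero, hγ⟩ := hPL.exists_eq_forall_mem_Icc_hasDerivWithinAt₀
  exact ⟨γ, hγ_zero, IsIntegralCurveOn.mono hγ Ioo_subset_Icc_self⟩

lemma exists_isIntegralCurve_of_lipschitzWith_of_bounded [CompleteSpace E] {F : E → E} {K L : ℝ≥0}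
    (hF : LipschitzWith K F) (hL : ∀ x, ‖F x‖ ≤ L) (x : E) :
    ∃ γ : ℝ → E, γ 0 = x ∧ IsIntegralCurve γ (fun _ ↦ F) :=
  exists_isIntegralCurve_of_forall_Ioo (fun _ ↦ hF) fun _ ↦
    exists_isIntegralCurveOn_Ioo_of_bounded hF hL x

lemma isIntegralCurve_eq_const_of_eq_zero {F : E → E} {K : ℝ≥0} (hF : LipschitzWith K F)
    {γ : ℝ → E} (hγ : IsIntegralCurve γ (fun _ ↦ F)) {t₀ : ℝ} (h_zero : F (γ t₀) = 0) :
    γ = fun _ ↦ γ t₀ :=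
  ODE_solution_unique_univ (v := fun _ ↦ F) (s := fun _ ↦ univ) (t₀ := t₀)
    (fun _ ↦ hF.lipschitzOnWith) (fun t ↦ ⟨hγ t, mem_univ _⟩)
    (fun t ↦ ⟨isIntegralCurve_const (fun _ ↦ h_zero) t, mem_univ _⟩) rfl

lemma exists_mem_segment_mem_frontier {s : Set E} (hs : IsClosed s) {x y : E} (hx : x ∈ s)
    (hy : y ∉ s) : ∃ z ∈ segment ℝ x y, z ∈ frontier s := by
  by_contra! h
  have h_cover : segment ℝ x y ⊆ interior s ∪ sᶜ := fun z hz ↦ by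
    by_cases hzs : z ∈ s
    · exact .inl (by_contra fun hz_int ↦ h z hz (hs.frontier_eq ▸ ⟨hzs, hz_int⟩))
    · exact .inr hzs
  have hx_int : x ∈ interior s :=
    (h_cover (left_mem_segment ℝ x y)).resolve_right fun hxs ↦ hxs hx
  obtain ⟨z, -, hz_int, hz_compl⟩ := (convex_segment x y).isPreconnected _ _ isOpen_interior
    hs.isOpen_compl h_cover ⟨x, left_mem_segment ℝ x y, hx_int⟩
    ⟨y, right_mem_segment ℝ x y, hy⟩
  exact hz_compl (interior_subset hz_int)

lemma lipschitzWith_indicator_of_eqOn_frontier {F : Type*} [SeminormedAddCommGroup F] {f : E → F}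
    {s : Set E} {K : ℝ≥0} (hs : IsClosed s) (hf : LipschitzOnWith K f s)
    (hf_frontier : EqOn f 0 (frontier s)) : LipschitzWith K (s.indicator f) := by
  have h_exit {x y : E} (hx : x ∈ s) (hy : y ∉ s) : dist (f x) 0 ≤ K * dist x y := by
    obtain ⟨z, hz_segment, hz⟩ := exists_mem_segment_mem_frontier hs hx hy
    calc dist (f x) 0 = dist (f x) (f z) := by rw [hf_frontier hz, Pi.zero_apply]
      _ ≤ K * dist x z := hf.dist_le_mul x hx z (hs.frontier_subset hz)
      _ ≤ K * dist x y := by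
        gcongr
        linarith [dist_add_dist_of_mem_segment hz_segment, dist_nonneg (x := z) (y := y)]
  refine .of_dist_le_mul fun x y ↦ ?_
  by_cases hx : x ∈ s <;> by_cases hy : y ∈ s
  · simpa only [indicator_of_mem hx, indicator_of_mem hy] using hf.dist_le_mul x hx y hy
  · simpa only [indicator_of_mem hx, indicator_of_notMem hy] using h_exit hx hy
  · simpa only [indicator_of_notMem hx, indicator_of_mem hy, dist_comm] using h_exit hy hx
  · simp only [indicator_of_notMem hx, indicator_of_notMem hy, dist_self]
    positivity

theorem exists_integralCurve_forall_mem_of_eqOn_frontier [CompleteSpace E] {F : E → E} {s : Set E}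
    {K L : ℝ≥0} (hs : IsClosed s) (hF : LipschitzOnWith K F s) (hL : ∀ x ∈ s, ‖F x‖ ≤ L)
    (hF_frontier : EqOn F 0 (frontier s)) {x : E} (hx : x ∈ s) :
    ∃ γ : ℝ → E, γ 0 = x ∧ ∀ t, γ t ∈ s ∧ HasDerivAt γ (F (γ t)) t := by
  have hG : LipschitzWith K (s.indicator F) :=
    lipschitzWith_indicator_of_eqOn_frontier hs hF hF_frontier
  have hG_bound (y : E) : ‖s.indicator F y‖ ≤ L := by
    by_cases hy : y ∈ s
    · simpa only [indicator_of_mem hy] using hL y hy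
    · simp [indicator_of_notMem hy]
  obtain ⟨γ, hγ_zero, hγ⟩ := exists_isIntegralCurve_of_lipschitzWith_of_bounded hG hG_bound x
  have hγ_mem (t : ℝ) : γ t ∈ s := by
    by_contra ht
    have h_const := isIntegralCurve_eq_const_of_eq_zero hG hγ (indicator_of_notMem ht F)
    exact ht (by rwa [← congrFun h_const 0, hγ_zero])
  exact ⟨γ, hγ_zero, fun t ↦ ⟨hγ_mem t, by simpa only [indicator_of_mem (hγ_mem t)] using hγ t⟩⟩

end IntegralCurves

lemma lipschitzOnWith_smul_of_bounded {α R M : Type*} [PseudoMetricSpace α] [SeminormedRing R]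
    [SeminormedAddCommGroup M] [Module R M] [IsBoundedSMul R M] {c : α → R} {f : α → M} {s : Set α}
    {Kc Kf Lc Lf : ℝ≥0} (hc : LipschitzOnWith Kc c s) (hf : LipschitzOnWith Kf f s)
    (hc_bound : ∀ x ∈ s, ‖c x‖ ≤ Lc) (hf_bound : ∀ x ∈ s, ‖f x‖ ≤ Lf) :
    LipschitzOnWith (Lc * Kf + Kc * Lf) (fun x ↦ c x • f x) s := by
  refine .of_dist_le_mul fun x hx y hy ↦ ?_
  calc dist (c x • f x) (c y • f y)
      ≤ dist (c x • f x) (c x • f y) + dist (c x • f y) (c y • f y) := dist_triangle _ _ _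
    _ ≤ ‖c x‖ * dist (f x) (f y) + dist (c x) (c y) * ‖f y‖ := by
      simp only [dist_eq_norm, ← smul_sub, ← sub_smul]
      exact add_le_add (norm_smul_le _ _) (norm_smul_le _ _)
    _ ≤ Lc * (Kf * dist x y) + Kc * dist x y * Lf := by
      gcongr
      exacts [hc_bound x hx, hf.dist_le_mul x hx y hy, hc.dist_le_mul x hx y hy, hf_bound y hy]
    _ = ↑(Lc * Kf + Kc * Lf) * dist x y := by push_cast; ring

section UnitBall

variable {E : Type*} [SeminormedAddCommGroup E]

lemma lipschitzOnWith_neg_one_sub_norm_sq :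
    LipschitzOnWith 2 (fun u : E ↦ -(1 - ‖u‖ ^ 2)) (closedBall 0 1) := by
  refine .of_dist_le_mul fun x hx y hy ↦ ?_
  rw [mem_closedBall_zero_iff] at hx hy
  calc dist (-(1 - ‖x‖ ^ 2)) (-(1 - ‖y‖ ^ 2)) = |(‖x‖ + ‖y‖) * (‖x‖ - ‖y‖)| := by
        rw [Real.dist_eq]; ring_nf
    _ = (‖x‖ + ‖y‖) * |‖x‖ - ‖y‖| := by rw [abs_mul, abs_of_nonneg (by positivity)]
    _ ≤ 2 * dist x y := by
      rw [dist_eq_norm]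
      gcongr
      exacts [by linarith, abs_norm_sub_norm_le x y]

lemma norm_neg_one_sub_norm_sq_le_one {u : E} (hu : u ∈ closedBall (0 : E) 1) :
    ‖-(1 - ‖u‖ ^ 2)‖ ≤ 1 := by
  rw [mem_closedBall_zero_iff] at hu
  rw [norm_neg, Real.norm_eq_abs, abs_le]
  constructor <;> nlinarith [norm_nonneg u]

lemma norm_le_of_lipschitzOnWith_closedBall {F : Type*} [SeminormedAddCommGroup F] {f : E → F}
    {K : ℝ≥0} {x y : E} {r : ℝ} (hf : LipschitzOnWith K f (closedBall x r))
    (hy : y ∈ closedBall x r) : ‖f y‖ ≤ ‖f x‖ + K * r := by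
  have hx : x ∈ closedBall x r := mem_closedBall_self (dist_nonneg.trans hy)
  calc ‖f y‖ ≤ ‖f x‖ + ‖f y - f x‖ := norm_le_norm_add_norm_sub' _ _
    _ ≤ ‖f x‖ + K * r := by
      gcongr
      calc ‖f y - f x‖ = dist (f y) (f x) := (dist_eq_norm _ _).symm
        _ ≤ K * dist y x := hf.dist_le_mul y hy x hx
        _ ≤ K * r := by gcongr; exact hy

end UnitBall

theorem stmt_4_general {E : Type*} [NormedAddCommGroup E] [NormedSpace ℝ E] [CompleteSpace E]
    {X : E → E} {K : ℝ≥0} (hX : LipschitzOnWith K X (closedBall 0 1)) :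
    ∀ v ∈ closedBall (0 : E) 1,
      ∃ γ : ℝ → E, γ 0 = v ∧
        ∀ t : ℝ, γ t ∈ closedBall (0 : E) 1 ∧ HasDerivAt γ (-(1 - ‖γ t‖ ^ 2) • X (γ t)) t := by
  intro v hv
  have hX_bound (u : E) (hu : u ∈ closedBall 0 1) : ‖X u‖ ≤ (‖X 0‖₊ + K : ℝ≥0) := by
    simpa using norm_le_of_lipschitzOnWith_closedBall hX hu
  have hc_bound (u : E) (hu : u ∈ closedBall 0 1) : ‖-(1 - ‖u‖ ^ 2)‖ ≤ (1 : ℝ≥0) :=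
    norm_neg_one_sub_norm_sq_le_one hu
  have hF := lipschitzOnWith_smul_of_bounded lipschitzOnWith_neg_one_sub_norm_sq hX
    hc_bound hX_bound
  refine exists_integralCurve_forall_mem_of_eqOn_frontier isClosed_closedBall hF
    (L := 1 * (‖X 0‖₊ + K)) (fun u hu ↦ ?_) (fun u hu ↦ ?_) hv
  · calc ‖-(1 - ‖u‖ ^ 2) • X u‖ ≤ ‖-(1 - ‖u‖ ^ 2)‖ * ‖X u‖ := norm_smul_le _ _
      _ ≤ (1 : ℝ≥0) * (‖X 0‖₊ + K : ℝ≥0) := by gcongr; exacts [hc_bound u hu, hX_bound u hu]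
      _ = (1 * (‖X 0‖₊ + K) : ℝ≥0) := (NNReal.coe_mul _ _).symm
  · simp [mem_sphere_zero_iff_norm.1 (frontier_closedBall_subset_sphere hu)]

lemma contDiff_gradient {E : Type*} [NormedAddCommGroup E] [InnerProductSpace ℝ E]
    [CompleteSpace E] {f : E → ℝ} {m n : WithTop ℕ∞} (hf : ContDiff ℝ n f) (hmn : m + 1 ≤ n) :
    ContDiff ℝ m (gradient f) :=
  (InnerProductSpace.toDual ℝ E).symm.contDiff.comp (hf.fderiv_right hmn)

/-- Existence of the one-parameter flow of `u ↦ -(1-‖u‖²)·∇A(u)` used in Section 4: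
starting from any point of the closed unit ball there is a forward-in-time integral
curve that stays in the closed unit ball for all `t ≥ 0`. -/
theorem stmt_4 (k : ℕ) (hk : 1 ≤ k)
    (A : EuclideanSpace ℝ (Fin k) → ℝ) (hA : ContDiff ℝ 2 A) :
    ∀ v ∈ Metric.closedBall (0 : EuclideanSpace ℝ (Fin k)) 1,
      ∃ γ : ℝ → EuclideanSpace ℝ (Fin k), γ 0 = v ∧
        ∀ t : ℝ, 0 ≤ t →
          γ t ∈ Metric.closedBall (0 : EuclideanSpace ℝ (Fin k)) 1 ∧
          HasDerivAt γ (-(1 - ‖γ t‖ ^ 2) • gradient A (γ t)) t := by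
  obtain ⟨K, hK⟩ := (contDiff_gradient hA one_add_one_eq_two.le).contDiffOn.exists_lipschitzOnWith
    one_ne_zero (convex_closedBall 0 1) (isCompact_closedBall 0 1)
  exact fun v hv ↦ (stmt_4_general hK v hv).imp fun γ hγ ↦ ⟨hγ.1, fun t _ ↦ hγ.2 t⟩
end

section
/- Let k ≥ 1, let c₀ > 0, and let A : E → ℝ be a C² function on the k-dimensional Euclidean space E such that for every u in the closed unit ball B̄ and every v ∈ E one has D²A(u)(v,v) ≤ -c₀·‖v‖². Let m be a point of the open unit ball with ∇A(m) = 0. Suppose γ : ℝ → E satisfies: γ(t) ∈ B̄ for all t ≥ 0 and γ has derivative -(1 - ‖γ(t)‖²)·∇A(γ(t)) at every t ≥ 0, and γ(0) ≠ m. Then ‖γ(t)‖ → 1 as t → +∞. -/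
/-!
Strong concavity gives `⟪∇A u - ∇A v, u - v⟫ ≤ -c‖u - v‖²` on the ball. With `v = m` it makes
`f = ‖γ - m‖²` grow at rate at least `2cf(1 - ‖γ‖²) ≥ 2cf(0)s`, where `s = 1 - ‖γ‖²`; as `f` is
bounded, `s` is integrable over `[0, ∞)`. With `v = 0` it gives `⟪∇A u, u⟫ ≤ ‖∇A 0‖`, hence
`s' ≤ 2‖∇A 0‖s`. A nonnegative integrable `s` whose relative growth rate is bounded above tends
to `0`.
-/

open Filter Metric Set Topology
open scoped RealInnerProductSpace

section RealFunctions

variable {f f' s s' : ℝ → ℝ} {a b t₀ : ℝ}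

theorem exists_tendsto_atTop_of_monotoneOn_Ici (hf : MonotoneOn f (Ici t₀))
    (hbdd : BddAbove (f '' Ici t₀)) : ∃ l, Tendsto f atTop (𝓝 l) := by
  rw [← range_domRestrict] at hbdd
  exact ⟨_, tendsto_comp_val_Ici_atTop.mp (tendsto_atTop_ciSup hf.monotone hbdd)⟩

theorem monotoneOn_Ici_of_hasDerivWithinAt_nonneg
    (hf : ∀ t ∈ Ici t₀, HasDerivWithinAt f (f' t) (Ici t₀) t) (hf' : ∀ t ∈ Ici t₀, 0 ≤ f' t) :
    MonotoneOn f (Ici t₀) :=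
  monotoneOn_of_hasDerivWithinAt_nonneg (convex_Ici t₀) (fun t ht ↦ (hf t ht).continuousWithinAt)
    (fun t ht ↦ (hf t (interior_subset ht)).mono interior_subset)
    (fun t ht ↦ hf' t (interior_subset ht))

theorem exists_mem_Ioo_eq_sub_of_hasDerivWithinAt_Ici
    (hf : ∀ t ∈ Ici t₀, HasDerivWithinAt f (f' t) (Ici t₀) t) {t : ℝ} (ht : t₀ ≤ t) :
    ∃ ξ ∈ Ioo t (t + 1), f' ξ = f (t + 1) - f t := by
  have hcont : ContinuousOn f (Icc t (t + 1)) := fun τ hτ ↦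
    (hf τ (ht.trans hτ.1)).continuousWithinAt.mono fun _ hx ↦ ht.trans hx.1
  have hderiv : ∀ τ ∈ Ioo t (t + 1), HasDerivAt f (f' τ) τ := fun τ hτ ↦
    (hf τ (ht.trans hτ.1.le)).hasDerivAt (Ici_mem_nhds (ht.trans_lt hτ.1))
  simpa only [add_sub_cancel_left, div_one] using
    exists_hasDerivAt_eq_slope f f' (lt_add_one t) hcont hderiv

theorem mul_le_mul_sub_of_hasDerivWithinAt_Ici
    (hf : ∀ t ∈ Ici t₀, HasDerivWithinAt f (f' t) (Ici t₀) t)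
    (hs : ∀ t ∈ Ici t₀, HasDerivWithinAt s (s' t) (Ici t₀) t)
    (ha : 0 ≤ a) (hs_nonneg : ∀ t ∈ Ici t₀, 0 ≤ s t)
    (hf' : ∀ t ∈ Ici t₀, a * s t ≤ f' t) (hs' : ∀ t ∈ Ici t₀, s' t ≤ b * s t)
    {t : ℝ} (ht : t₀ ≤ t) :
    a * s (t + 1) ≤ (1 + |b|) * (f (t + 1) - f t) := by
  have hf_mono : MonotoneOn f (Ici t₀) := monotoneOn_Ici_of_hasDerivWithinAt_nonneg hf fun τ hτ ↦
    (mul_nonneg ha (hs_nonneg τ hτ)).trans (hf' τ hτ)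
  have hfs_mono : MonotoneOn (fun τ ↦ |b| * f τ - a * s τ) (Ici t₀) := by
    refine monotoneOn_Ici_of_hasDerivWithinAt_nonneg
      (fun τ hτ ↦ ((hf τ hτ).const_mul |b|).sub ((hs τ hτ).const_mul a)) fun τ hτ ↦ ?_
    rw [sub_nonneg]
    calc a * s' τ ≤ a * (|b| * s τ) := by
          gcongr
          exact (hs' τ hτ).trans (mul_le_mul_of_nonneg_right (le_abs_self b) (hs_nonneg τ hτ))
      _ = |b| * (a * s τ) := by ring
      _ ≤ |b| * f' τ := by gcongr; exact hf' τ hτ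
  obtain ⟨ξ, ⟨htξ, hξt⟩, hξ⟩ := exists_mem_Ioo_eq_sub_of_hasDerivWithinAt_Ici hf ht
  have hξ₀ : ξ ∈ Ici t₀ := ht.trans htξ.le
  have hsξ : a * s ξ ≤ f (t + 1) - f t := hξ ▸ hf' ξ hξ₀
  have hfs : |b| * f ξ - a * s ξ ≤ |b| * f (t + 1) - a * s (t + 1) :=
    hfs_mono hξ₀ (hξ₀.out.trans hξt.le) hξt.le
  have hfξ : |b| * f t ≤ |b| * f ξ := by
    gcongr
    exact hf_mono ht hξ₀ htξ.le
  linarith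

theorem tendsto_zero_of_mul_le_deriv_of_deriv_le_mul
    (hf : ∀ t ∈ Ici t₀, HasDerivWithinAt f (f' t) (Ici t₀) t)
    (hs : ∀ t ∈ Ici t₀, HasDerivWithinAt s (s' t) (Ici t₀) t)
    (ha : 0 < a) (hs_nonneg : ∀ t ∈ Ici t₀, 0 ≤ s t)
    (hf' : ∀ t ∈ Ici t₀, a * s t ≤ f' t) (hs' : ∀ t ∈ Ici t₀, s' t ≤ b * s t)
    (hbdd : BddAbove (f '' Ici t₀)) : Tendsto s atTop (𝓝 0) := by
  have hf_mono : MonotoneOn f (Ici t₀) := monotoneOn_Ici_of_hasDerivWithinAt_nonneg hf fun t ht ↦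
    (mul_nonneg ha.le (hs_nonneg t ht)).trans (hf' t ht)
  obtain ⟨l, hl⟩ := exists_tendsto_atTop_of_monotoneOn_Ici hf_mono hbdd
  have hshift : Tendsto (fun t : ℝ ↦ t - 1) atTop atTop :=
    tendsto_atTop_add_const_right _ (-1) tendsto_id
  have hbound : Tendsto (fun t ↦ (1 + |b|) * (f t - f (t - 1)) / a) atTop (𝓝 0) := by
    simpa using ((hl.sub (hl.comp hshift)).const_mul (1 + |b|)).div_const a
  refine squeeze_zero' ?_ ?_ hbound
  · filter_upwards [eventually_ge_atTop t₀] with t ht using hs_nonneg t ht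
  · filter_upwards [eventually_ge_atTop (t₀ + 1)] with t ht
    rw [le_div_iff₀' ha]
    simpa only [sub_add_cancel] using mul_le_mul_sub_of_hasDerivWithinAt_Ici hf hs ha.le
      hs_nonneg hf' hs' (le_sub_iff_add_le.mpr ht)

end RealFunctions

theorem fderiv_sub_fderiv_apply_sub_le_of_iteratedFDeriv_two_le {E : Type*} [NormedAddCommGroup E]
    [NormedSpace ℝ E] {A : E → ℝ} {S : Set E} {C : ℝ} (hS : Convex ℝ S)
    (hA : ∀ u ∈ S, DifferentiableAt ℝ (fderiv ℝ A) u)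
    (hHess : ∀ u ∈ S, ∀ v, iteratedFDeriv ℝ 2 A u ![v, v] ≤ C * ‖v‖ ^ 2)
    {x y : E} (hx : x ∈ S) (hy : y ∈ S) :
    (fderiv ℝ A y - fderiv ℝ A x) (y - x) ≤ C * ‖y - x‖ ^ 2 := by
  let p : ℝ → E := AffineMap.lineMap (k := ℝ) x y
  have hp : ∀ τ ∈ Icc (0 : ℝ) 1, p τ ∈ S := fun τ hτ ↦ hS.lineMap_mem hx hy hτ
  have hderiv : ∀ τ ∈ Icc (0 : ℝ) 1, HasDerivAt (fun τ ↦ fderiv ℝ A (p τ) (y - x))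
      (iteratedFDeriv ℝ 2 A (p τ) ![y - x, y - x]) τ := fun τ hτ ↦ by
    have h := (hA _ (hp τ hτ)).hasFDerivAt.comp_hasDerivAt τ AffineMap.hasDerivAt_lineMap
    simpa [iteratedFDeriv_two_apply] using h.clm_apply (hasDerivAt_const τ (y - x))
  obtain ⟨τ, hτ, hslope⟩ := exists_hasDerivAt_eq_slope _ _ zero_lt_one
    (fun τ hτ ↦ (hderiv τ hτ).continuousAt.continuousWithinAt)
    (fun τ hτ ↦ hderiv τ (Ioo_subset_Icc_self hτ))
  calc (fderiv ℝ A y - fderiv ℝ A x) (y - x)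
      = iteratedFDeriv ℝ 2 A (p τ) ![y - x, y - x] := by simpa [p] using hslope.symm
    _ ≤ C * ‖y - x‖ ^ 2 := hHess _ (hp τ (Ioo_subset_Icc_self hτ)) _

theorem one_sub_norm_sq_nonneg {E : Type*} [SeminormedAddCommGroup E] {u : E}
    (hu : u ∈ closedBall 0 1) : 0 ≤ 1 - ‖u‖ ^ 2 :=
  sub_nonneg.mpr (pow_le_one₀ (norm_nonneg u) (mem_closedBall_zero_iff.mp hu))

section InnerProductSpace

variable {E : Type*} [NormedAddCommGroup E] [InnerProductSpace ℝ E]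

theorem inner_gradient_sub_gradient_le_of_iteratedFDeriv_two_le [CompleteSpace E] {A : E → ℝ}
    {S : Set E} {C : ℝ} (hS : Convex ℝ S) (hA : ∀ u ∈ S, DifferentiableAt ℝ (fderiv ℝ A) u)
    (hHess : ∀ u ∈ S, ∀ v, iteratedFDeriv ℝ 2 A u ![v, v] ≤ C * ‖v‖ ^ 2)
    {x y : E} (hx : x ∈ S) (hy : y ∈ S) :
    ⟪gradient A y - gradient A x, y - x⟫ ≤ C * ‖y - x‖ ^ 2 := by
  simpa only [inner_sub_left, inner_gradient_left, sub_apply] using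
    fderiv_sub_fderiv_apply_sub_le_of_iteratedFDeriv_two_le hS hA hHess hx hy

theorem inner_le_norm_of_inner_sub_nonpos {x y u : E} (h : ⟪x - y, u⟫ ≤ 0)
    (hu : u ∈ closedBall 0 1) : ⟪x, u⟫ ≤ ‖y‖ := by
  rw [inner_sub_left, sub_nonpos] at h
  calc ⟪x, u⟫ ≤ ⟪y, u⟫ := h
    _ ≤ ‖y‖ * ‖u‖ := real_inner_le_norm y u
    _ ≤ ‖y‖ := mul_le_of_le_one_right (norm_nonneg y) (mem_closedBall_zero_iff.mp hu)

theorem hasDerivWithinAt_norm_sub_sq {γ : ℝ → E} {r t : ℝ} {g : E} {s : Set ℝ}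
    (hγ : HasDerivWithinAt γ (-r • g) s t) (p : E) :
    HasDerivWithinAt (fun t ↦ ‖γ t - p‖ ^ 2) (-2 * r * ⟪g, γ t - p⟫) s t := by
  refine (hγ.sub_const p).norm_sq.congr_deriv ?_
  rw [inner_smul_right, real_inner_comm]
  ring

variable {G : E → E} {γ : ℝ → E} {m : E} {b c t₀ : ℝ}

theorem monotoneOn_norm_sub_sq_of_isIntegralCurveOn
    (hγ : IsIntegralCurveOn γ (fun _ u ↦ -(1 - ‖u‖ ^ 2) • G u) (Ici t₀))
    (hball : ∀ t ∈ Ici t₀, γ t ∈ closedBall 0 1) (hG : ∀ u ∈ closedBall 0 1, ⟪G u, u - m⟫ ≤ 0) :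
    MonotoneOn (fun t ↦ ‖γ t - m‖ ^ 2) (Ici t₀) :=
  monotoneOn_Ici_of_hasDerivWithinAt_nonneg
    (fun t ht ↦ hasDerivWithinAt_norm_sub_sq (hγ t ht) m) fun t ht ↦
      mul_nonneg_of_nonpos_of_nonpos
        (by linarith [one_sub_norm_sq_nonneg (hball t ht)]) (hG _ (hball t ht))

theorem mul_norm_sub_sq_le_neg_inner_of_isIntegralCurveOn
    (hγ : IsIntegralCurveOn γ (fun _ u ↦ -(1 - ‖u‖ ^ 2) • G u) (Ici t₀))
    (hball : ∀ t ∈ Ici t₀, γ t ∈ closedBall 0 1) (hc : 0 ≤ c)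
    (hG : ∀ u ∈ closedBall 0 1, ⟪G u, u - m⟫ ≤ -c * ‖u - m‖ ^ 2) {t : ℝ} (ht : t ∈ Ici t₀) :
    c * ‖γ t₀ - m‖ ^ 2 ≤ -⟪G (γ t), γ t - m⟫ := by
  have hmono : MonotoneOn (fun t ↦ ‖γ t - m‖ ^ 2) (Ici t₀) :=
    monotoneOn_norm_sub_sq_of_isIntegralCurveOn hγ hball fun u hu ↦
      (hG u hu).trans (mul_nonpos_of_nonpos_of_nonneg (neg_nonpos.mpr hc) (sq_nonneg _))
  calc c * ‖γ t₀ - m‖ ^ 2 ≤ c * ‖γ t - m‖ ^ 2 :=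
        mul_le_mul_of_nonneg_left (hmono self_mem_Ici ht ht) hc
    _ ≤ -⟪G (γ t), γ t - m⟫ := by linarith [hG _ (hball t ht)]

theorem tendsto_norm_one_of_isIntegralCurveOn
    (hγ : IsIntegralCurveOn γ (fun _ u ↦ -(1 - ‖u‖ ^ 2) • G u) (Ici t₀))
    (hball : ∀ t ∈ Ici t₀, γ t ∈ closedBall 0 1) (hγ₀ : γ t₀ ≠ m) (hc : 0 < c)
    (hGm : ∀ u ∈ closedBall 0 1, ⟪G u, u - m⟫ ≤ -c * ‖u - m‖ ^ 2)
    (hGb : ∀ u ∈ closedBall 0 1, ⟪G u, u⟫ ≤ b) :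
    Tendsto (fun t ↦ ‖γ t‖) atTop (𝓝 1) := by
  have hd : 0 < ‖γ t₀ - m‖ := norm_sub_pos_iff.mpr hγ₀
  have hs_nonneg : ∀ t ∈ Ici t₀, 0 ≤ 1 - ‖γ t‖ ^ 2 := fun t ht ↦
    one_sub_norm_sq_nonneg (hball t ht)
  have hf' : ∀ t ∈ Ici t₀, 2 * (c * ‖γ t₀ - m‖ ^ 2) * (1 - ‖γ t‖ ^ 2) ≤
      -2 * (1 - ‖γ t‖ ^ 2) * ⟪G (γ t), γ t - m⟫ := fun t ht ↦ by
    have h := mul_norm_sub_sq_le_neg_inner_of_isIntegralCurveOn hγ hball hc.le hGm ht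
    linarith [mul_le_mul_of_nonneg_left h (hs_nonneg t ht)]
  have hs : ∀ t ∈ Ici t₀, HasDerivWithinAt (fun t ↦ 1 - ‖γ t‖ ^ 2)
      (2 * (1 - ‖γ t‖ ^ 2) * ⟪G (γ t), γ t⟫) (Ici t₀) t := fun t ht ↦ by
    simpa using (hasDerivWithinAt_norm_sub_sq (hγ t ht) 0).const_sub 1
  have hs' : ∀ t ∈ Ici t₀,
      2 * (1 - ‖γ t‖ ^ 2) * ⟪G (γ t), γ t⟫ ≤ 2 * b * (1 - ‖γ t‖ ^ 2) := fun t ht ↦ by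
    linarith [mul_le_mul_of_nonneg_left (hGb _ (hball t ht)) (hs_nonneg t ht)]
  have hbdd : BddAbove ((fun t ↦ ‖γ t - m‖ ^ 2) '' Ici t₀) := by
    refine ⟨(1 + ‖m‖) ^ 2, forall_mem_image.mpr fun t ht ↦ ?_⟩
    gcongr
    exact norm_sub_le_of_le (mem_closedBall_zero_iff.mp (hball t ht)) le_rfl
  have hs_tendsto : Tendsto (fun t ↦ 1 - ‖γ t‖ ^ 2) atTop (𝓝 0) :=
    tendsto_zero_of_mul_le_deriv_of_deriv_le_mul
      (fun t ht ↦ hasDerivWithinAt_norm_sub_sq (hγ t ht) m) hs (by positivity) hs_nonneg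
      hf' hs' hbdd
  simpa using (hs_tendsto.const_sub 1).sqrt

theorem stmt_6_general [CompleteSpace E] {A : E → ℝ}
    (hA : ∀ u ∈ closedBall (0 : E) 1, ContDiffAt ℝ 2 A u) (hc : 0 < c)
    (hHess : ∀ u ∈ closedBall (0 : E) 1, ∀ v, iteratedFDeriv ℝ 2 A u ![v, v] ≤ -c * ‖v‖ ^ 2)
    (hm : m ∈ closedBall 0 1) (hgrad : gradient A m = 0)
    (hγ : IsIntegralCurveOn γ (fun _ u ↦ -(1 - ‖u‖ ^ 2) • gradient A u) (Ici t₀))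
    (hball : ∀ t ∈ Ici t₀, γ t ∈ closedBall 0 1) (hγ₀ : γ t₀ ≠ m) :
    Tendsto (fun t ↦ ‖γ t‖) atTop (𝓝 1) := by
  have hA' : ∀ u ∈ closedBall (0 : E) 1, DifferentiableAt ℝ (fderiv ℝ A) u := fun u hu ↦
    ((hA u hu).fderiv_right (m := 1) (by norm_num)).differentiableAt one_ne_zero
  have hconcave {x y : E} (hx : x ∈ closedBall 0 1) (hy : y ∈ closedBall 0 1) :
      ⟪gradient A y - gradient A x, y - x⟫ ≤ -c * ‖y - x‖ ^ 2 :=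
    inner_gradient_sub_gradient_le_of_iteratedFDeriv_two_le (convex_closedBall 0 1) hA' hHess hx hy
  have hGb : ∀ u ∈ closedBall (0 : E) 1, ⟪gradient A u, u⟫ ≤ ‖gradient A 0‖ := fun u hu ↦ by
    have h := hconcave (mem_closedBall_self zero_le_one) hu
    rw [sub_zero] at h
    exact inner_le_norm_of_inner_sub_nonpos
      (h.trans (mul_nonpos_of_nonpos_of_nonneg (neg_nonpos.mpr hc.le) (sq_nonneg _))) hu
  exact tendsto_norm_one_of_isIntegralCurveOn hγ hball hγ₀ hc
    (fun u hu ↦ by simpa only [hgrad, sub_zero] using hconcave hm hu) hGb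

end InnerProductSpace

/-- Escape to the boundary (used in the proof of Lemma 4.5): under the strict Hessian
upper bound `D²A ≤ -c₀·Id` on the closed unit ball, every forward integral curve of
`u ↦ -(1-‖u‖²)·∇A(u)` starting at a point different from the unique interior critical
point `m` satisfies `‖γ(t)‖ → 1` as `t → ∞`. -/
theorem stmt_6 (k : ℕ) (hk : 1 ≤ k) (c₀ : ℝ) (hc₀ : 0 < c₀)
    (A : EuclideanSpace ℝ (Fin k) → ℝ) (hA : ContDiff ℝ 2 A)
    (hHess : ∀ u ∈ Metric.closedBall (0 : EuclideanSpace ℝ (Fin k)) 1,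
      ∀ v : EuclideanSpace ℝ (Fin k),
        iteratedFDeriv ℝ 2 A u ![v, v] ≤ -c₀ * ‖v‖ ^ 2)
    (m : EuclideanSpace ℝ (Fin k))
    (hm : m ∈ Metric.ball (0 : EuclideanSpace ℝ (Fin k)) 1)
    (hgrad : gradient A m = 0)
    (γ : ℝ → EuclideanSpace ℝ (Fin k))
    (hγ : ∀ t : ℝ, 0 ≤ t →
      γ t ∈ Metric.closedBall (0 : EuclideanSpace ℝ (Fin k)) 1 ∧
      HasDerivAt γ (-(1 - ‖γ t‖ ^ 2) • gradient A (γ t)) t)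
    (hγ0 : γ 0 ≠ m) :
    Filter.Tendsto (fun t => ‖γ t‖) Filter.atTop (nhds 1) :=
  stmt_6_general (fun _ _ ↦ hA.contDiffAt) hc₀ hHess (Metric.ball_subset_closedBall hm) hgrad
    (fun t ht ↦ (hγ t ht).2.hasDerivWithinAt) (fun t ht ↦ (hγ t ht).1) hγ0
end

section
/- Let k ≥ 1, let X be a compact metric space with distance d, let B̄ᵏ be the closed unit ball of the k-dimensional Euclidean space, and suppose given: a continuous map F : B̄ᵏ × X → X with F(0,x) = x and F(-v, F(v,x)) = x for all v ∈ B̄ᵏ and x ∈ X; a continuous function μ : X → ℝ; and a point Σ ∈ X such that μ(F(v,Σ)) < μ(Σ) for every v ∈ B̄ᵏ with v ≠ 0. Then for every ε > 0 there exists η > 0 such that: whenever x ∈ X satisfies d(x,Σ) ≥ ε and μ(F(v,x)) ≤ μ(x) + η for some v ∈ B̄ᵏ, one has d(F(v,x), Σ) ≥ 2η. -/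
/-!
Put `y = F v x`, so that `x` is again an image `F w y` under the family, with `w = -v`. For every
`w` in the ball, either `F w Σ = Σ` or `μ (F w Σ) < μ Σ`, so the continuous function
`max (ε - d(F w y, Σ)) (μ y - μ (F w y))` of `(w, y)` is positive at `y = Σ`. By compactness of the
ball it stays above some `δ > 0` for all `w` as soon as `y` is close to `Σ`. Hence, if `y = F v x`
is that close to `Σ` and `x = F w y` is `ε`-far from `Σ`, then `μ (F v x) > μ x + δ`.
-/

open Filter Topology

section TubeLemma

variable {V X β : Type*} [TopologicalSpace V] [TopologicalSpace X] [TopologicalSpace β]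
  {K : Set V} {f : V × X → β} {a : X}

theorem eventually_forall_mem_of_continuousOn_prod (hK : IsCompact K)
    (hf : ContinuousOn f (K ×ˢ Set.univ)) {U : Set β} (hU : IsOpen U)
    (hfU : ∀ v ∈ K, f (v, a) ∈ U) :
    ∀ᶠ y in 𝓝 a, ∀ v ∈ K, f (v, y) ∈ U := by
  have eventually_mem_at : ∀ v ∈ K, ∀ᶠ p : X × V in 𝓝 (a, v), p.2 ∈ K → f (p.2, p.1) ∈ U := by
    intro v hv
    have h_within : ∀ᶠ q in 𝓝[K ×ˢ Set.univ] (v, a), f q ∈ U :=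
      hf (v, a) ⟨hv, Set.mem_univ a⟩ (hU.mem_nhds (hfU v hv))
    filter_upwards [(continuous_swap.tendsto (a, v)).eventually
      (eventually_nhdsWithin_iff.1 h_within)] with p hp hpK
    exact hp ⟨hpK, Set.mem_univ _⟩
  exact (hK.eventually_forall_of_forall_eventually (P := fun y v => v ∈ K → f (v, y) ∈ U)
    eventually_mem_at).mono fun y hy v hv => hy v hv hv

theorem exists_gt_eventually_forall_lt_of_continuousOn_prod [LinearOrder β] [ClosedIicTopology β]
    [DenselyOrdered β] [NoMaxOrder β] (hK : IsCompact K)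
    (hf : ContinuousOn f (K ×ˢ Set.univ)) {c : β} (hc : ∀ v ∈ K, c < f (v, a)) :
    ∃ δ > c, ∀ᶠ y in 𝓝 a, ∀ v ∈ K, δ < f (v, y) := by
  have hfa : ContinuousOn (fun v => f (v, a)) K :=
    hf.comp (Continuous.prodMk_left a).continuousOn fun v hv => ⟨hv, Set.mem_univ a⟩
  obtain ⟨m, hcm, hm⟩ := hK.exists_forall_le' hfa hc
  obtain ⟨δ, hcδ, hδm⟩ := exists_between hcm
  exact ⟨δ, hcδ, eventually_forall_mem_of_continuousOn_prod hK hf isOpen_Ioi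
    fun v hv => hδm.trans_le (hm v hv)⟩

end TubeLemma

section StayAway

variable {V X : Type*} [TopologicalSpace V] [PseudoMetricSpace X] {K : Set V} {F : V → X → X}
  {μ : X → ℝ} {a : X}

theorem exists_pos_eventually_forall_dist_lt_or_add_lt (hK : IsCompact K)
    (hF : ContinuousOn (fun p : V × X => F p.1 p.2) (K ×ˢ Set.univ)) (hμ : Continuous μ)
    (ha : ∀ v ∈ K, F v a ≠ a → μ (F v a) < μ a) {ε : ℝ} (hε : 0 < ε) :
    ∃ δ > 0, ∀ᶠ y in 𝓝 a, ∀ v ∈ K, dist (F v y) a < ε ∨ μ (F v y) + δ < μ y := by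
  let gap : V × X → ℝ := fun p => max (ε - dist (F p.1 p.2) a) (μ p.2 - μ (F p.1 p.2))
  have gap_continuousOn : ContinuousOn gap (K ×ˢ Set.univ) :=
    (continuousOn_const.sub ((continuous_id.dist continuous_const).comp_continuousOn hF)).sup
      ((hμ.comp continuous_snd).continuousOn.sub (hμ.comp_continuousOn hF))
  have gap_pos : ∀ v ∈ K, 0 < gap (v, a) := by
    intro v hv
    by_cases hfix : F v a = a
    · exact lt_max_of_lt_left (by simpa [hfix] using hε)
    · exact lt_max_of_lt_right (sub_pos.2 (ha v hv hfix))
  obtain ⟨δ, hδ, hgap⟩ :=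
    exists_gt_eventually_forall_lt_of_continuousOn_prod hK gap_continuousOn gap_pos
  refine ⟨δ, hδ, hgap.mono fun y hy v hv => (lt_max_iff.1 (hy v hv)).imp (fun hdist => ?_)
    fun hdrop => ?_⟩
  · linarith
  · linarith

theorem stmt_8_general (hK : IsCompact K)
    (hF : ContinuousOn (fun p : V × X => F p.1 p.2) (K ×ˢ Set.univ))
    (hFinv : ∀ v ∈ K, ∃ w ∈ K, Function.LeftInverse (F w) (F v)) (hμ : Continuous μ)
    (ha : ∀ v ∈ K, F v a ≠ a → μ (F v a) < μ a) {ε : ℝ} (hε : 0 < ε) :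
    ∃ η : ℝ, 0 < η ∧ ∀ x : X, ε ≤ dist x a → ∀ v ∈ K,
      μ (F v x) ≤ μ x + η → 2 * η ≤ dist (F v x) a := by
  obtain ⟨δ, hδ, hnear⟩ := exists_pos_eventually_forall_dist_lt_or_add_lt hK hF hμ ha hε
  obtain ⟨r, hr, hball⟩ := Metric.eventually_nhds_iff.1 hnear
  refine ⟨min δ (r / 2), lt_min hδ (half_pos hr), fun x hx v hv hmass => ?_⟩
  by_contra! hclose
  obtain ⟨w, hw, hwv⟩ := hFinv v hv
  have hdist : dist (F v x) a < r := by linarith [min_le_right δ (r / 2)]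
  have hreturn : dist x a < ε ∨ μ x + δ < μ (F v x) := by
    simpa only [hwv x] using hball hdist w hw
  rcases hreturn with hxa | hdrop
  · exact hx.not_gt hxa
  · linarith [min_le_left δ (r / 2)]

end StayAway

/-- Abstract form of Lemma 4.4 (the "stay-away" lemma): `X` compact metric, `F` a
continuous action of the closed unit ball of `ℝᵏ` with `F 0 = id` and `F (-v)` inverting
`F v`, `μ` continuous, and `Σ` a point whose `μ`-value strictly drops under every
`F v` with `v ≠ 0`.  Then for every `ε > 0` there is `η > 0` such that any `x` with
`d(x,Σ) ≥ ε` whose mass increases by at most `η` under some `F v` ends up at distance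
at least `2η` from `Σ`. -/
theorem stmt_8 (k : ℕ) (hk : 1 ≤ k)
    (X : Type*) [MetricSpace X] [CompactSpace X]
    (F : EuclideanSpace ℝ (Fin k) → X → X)
    (hFcont : ContinuousOn (fun p : EuclideanSpace ℝ (Fin k) × X => F p.1 p.2)
      (Metric.closedBall 0 1 ×ˢ (Set.univ : Set X)))
    (hF0 : ∀ x : X, F 0 x = x)
    (hFinv : ∀ v ∈ Metric.closedBall (0 : EuclideanSpace ℝ (Fin k)) 1,
      ∀ x : X, F (-v) (F v x) = x)
    (μ : X → ℝ) (hμ : Continuous μ)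
    (Sig : X)
    (hSig : ∀ v ∈ Metric.closedBall (0 : EuclideanSpace ℝ (Fin k)) 1,
      v ≠ 0 → μ (F v Sig) < μ Sig) :
    ∀ ε : ℝ, 0 < ε → ∃ η : ℝ, 0 < η ∧
      ∀ x : X, ε ≤ dist x Sig →
        ∀ v ∈ Metric.closedBall (0 : EuclideanSpace ℝ (Fin k)) 1,
          μ (F v x) ≤ μ x + η → 2 * η ≤ dist (F v x) Sig := by
  intro ε hε
  exact stmt_8_general (isCompact_closedBall 0 1) hFcont
    (fun v hv => ⟨-v, by simpa only [mem_closedBall_zero_iff, norm_neg] using hv, hFinv v hv⟩) hμ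
    (fun v hv hmoved => hSig v hv fun hv0 => hmoved (hv0 ▸ hF0 Sig)) hε
end

section
/- Let k ≥ 0 and N ≥ 1, and let K be a (geometric) simplicial complex in ℝᴺ with finitely many faces, each face having at most k+1 vertices (so K has dimension at most k). Let |K| ⊆ ℝᴺ denote the underlying space of K (the union of the convex hulls of its faces), and let f : |K| → E be a continuous map into the (k+1)-dimensional Euclidean space E. Then for every ε > 0 there exists a continuous map a : |K| → E such that ‖a(x)‖ < ε and a(x) ≠ f(x) for every x ∈ |K|. -/
/-!
A continuous map `f` from a metric space `X` to a normed space is uniformly close to a locally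
Lipschitz map `g`: average finitely many values of `f` with weights that are distances to the
complements of a locally finite cover. Locally Lipschitz maps do not raise Hausdorff dimension, so
when `X` is separable and `dimH X < dim E` the complement of the range of `g` is dense in `E` and
contains a small vector `v`. Then `a = f - g + v` is small, and `a - f = v - g` has no zeros. The
underlying space of a complex of dimension at most `k` with countably many simplices is separable
and has Hausdorff dimension at most `k`.
-/

open Function Module Set Topology
open scoped NNReal

section LocallyLipschitz

variable {ι X E : Type*}

theorem locallyLipschitz_finset_sum [PseudoEMetricSpace X] [SeminormedAddCommGroup E]
    {F : Finset ι} {f : ι → X → E} (hf : ∀ i ∈ F, LocallyLipschitz (f i)) :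
    LocallyLipschitz fun x => ∑ i ∈ F, f i x := by
  classical
  induction F using Finset.induction_on with
  | empty => simpa only [Finset.sum_empty] using LocallyLipschitz.const (0 : E)
  | insert i F hi ih =>
    simp only [Finset.sum_insert hi]
    exact (hf i (Finset.mem_insert_self i F)).add
      (ih fun j hj => hf j (Finset.mem_insert_of_mem hj))

variable [NormedAddCommGroup E] [NormedSpace ℝ E]

theorem exists_lipschitzOnWith_centerMass [PseudoEMetricSpace X] {F : Finset ι} {ρ : ι → X → ℝ}
    (hρ : ∀ i ∈ F, LocallyLipschitz (ρ i)) (c : ι → E) {x : X} (hx : ∑ i ∈ F, ρ i x ≠ 0) :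
    ∃ K : ℝ≥0, ∃ t ∈ 𝓝 x, LipschitzOnWith K (fun y => F.centerMass (ρ · y) c) t := by
  let sums : X → ℝ × E := fun y => (∑ i ∈ F, ρ i y, ∑ i ∈ F, ρ i y • c i)
  have hsums : LocallyLipschitz sums :=
    (locallyLipschitz_finset_sum hρ).prodMk <| locallyLipschitz_finset_sum fun i hi =>
      (ContinuousLinearMap.toSpanSingleton ℝ (c i)).lipschitz.locallyLipschitz.comp (hρ i hi)
  have hquot : ContDiffAt ℝ 1 (fun p : ℝ × E => p.1⁻¹ • p.2) (sums x) :=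
    (contDiffAt_fst.inv hx).smul contDiffAt_snd
  obtain ⟨K, t, ht, hKt⟩ := hquot.exists_lipschitzOnWith
  obtain ⟨L, u, hu, hLu⟩ := hsums x
  exact ⟨K * L, u ∩ sums ⁻¹' t, Filter.inter_mem hu (hsums.continuous.continuousAt ht),
    hKt.comp (hLu.mono inter_subset_left) fun _ hy => hy.2⟩

theorem locallyLipschitz_centerMass_of_locallyFinite [PseudoEMetricSpace X] {ρ : ι → X → ℝ}
    (hfin : LocallyFinite fun i => support (ρ i)) (hρ : ∀ i, LocallyLipschitz (ρ i))
    (hsum : ∀ x, ∑ i ∈ (hfin.point_finite x).toFinset, ρ i x ≠ 0) (c : ι → E) :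
    LocallyLipschitz fun x => (hfin.point_finite x).toFinset.centerMass (ρ · x) c := by
  intro x
  obtain ⟨t, ht, htfin⟩ := hfin x
  let F := htfin.toFinset
  have hsub : ∀ y ∈ t, (hfin.point_finite y).toFinset ⊆ F := fun y hy i hi =>
    htfin.mem_toFinset.2 ⟨y, (hfin.point_finite y).mem_toFinset.1 hi, hy⟩
  have hzero : ∀ y, ∀ i ∈ F, i ∉ (hfin.point_finite y).toFinset → ρ i y = 0 := fun y i _ hi => by
    simpa using hi
  have hx : ∑ i ∈ F, ρ i x ≠ 0 := by
    rw [← Finset.sum_subset (hsub x (mem_of_mem_nhds ht)) (hzero x)]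
    exact hsum x
  obtain ⟨K, u, hu, hKu⟩ := exists_lipschitzOnWith_centerMass (fun i _ => hρ i) c hx
  have heq : EqOn (fun y => (hfin.point_finite y).toFinset.centerMass (ρ · y) c)
      (fun y => F.centerMass (ρ · y) c) t := fun y hy =>
    Finset.centerMass_subset c (hsub y hy) (hzero y)
  refine ⟨K, u ∩ t, Filter.inter_mem hu ht, fun y hy z hz => ?_⟩
  rw [heq hy.2, heq hz.2]
  exact hKu hy.1 hz.1

variable [PseudoMetricSpace X]

theorem exists_locallyLipschitz_forall_mem_convex_of_local_const {t : X → Set E}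
    (ht : ∀ x, Convex ℝ (t x)) (H : ∀ x, ∃ c, ∀ᶠ y in 𝓝 x, c ∈ t y) :
    ∃ g : X → E, LocallyLipschitz g ∧ ∀ x, g x ∈ t x := by
  -- `infDist` to the empty set is `0`, so the weights below need the cover to consist of proper
  -- subsets of `X`.
  by_cases hconst : ∃ c, ∀ x, c ∈ t x
  · obtain ⟨c, hc⟩ := hconst
    exact ⟨fun _ => c, LocallyLipschitz.const c, hc⟩
  push Not at hconst
  choose c hc using H
  obtain ⟨v, hvo, hvc, hvfin, hvsub⟩ := precise_refinement
    (fun x => interior {y | c x ∈ t y}) (fun _ => isOpen_interior)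
    (iUnion_eq_univ_iff.2 fun x => ⟨x, mem_interior_iff_mem_nhds.2 (hc x)⟩)
  have hct : ∀ i, ∀ y ∈ v i, c i ∈ t y := fun i y hy =>
    interior_subset (s := {z | c i ∈ t z}) (hvsub i hy)
  let ρ : X → X → ℝ := fun i y => Metric.infDist y (v i)ᶜ
  have hpos : ∀ {i y}, y ∈ v i → 0 < ρ i y := fun {i y} hy => by
    obtain ⟨z, hz⟩ := hconst (c i)
    exact ((hvo i).isClosed_compl.notMem_iff_infDist_pos ⟨z, fun h => hz (hct i z h)⟩).1
      (not_not.2 hy)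
  have hsupp : ∀ i, support (ρ i) ⊆ v i := fun i y hy =>
    by_contra fun h => hy (Metric.infDist_zero_of_mem h)
  have hfin : LocallyFinite fun i => support (ρ i) := hvfin.subset hsupp
  have hsum : ∀ y, 0 < ∑ i ∈ (hfin.point_finite y).toFinset, ρ i y := fun y => by
    obtain ⟨i, hi⟩ := iUnion_eq_univ_iff.1 hvc y
    exact Finset.sum_pos' (fun _ _ => Metric.infDist_nonneg)
      ⟨i, (hfin.point_finite y).mem_toFinset.2 (hpos hi).ne', hpos hi⟩
  refine ⟨_, locallyLipschitz_centerMass_of_locallyFinite hfin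
    (fun i => (Metric.lipschitz_infDist_pt _).locallyLipschitz) (fun y => (hsum y).ne') c,
    fun y => (ht y).centerMass_mem (fun _ _ => Metric.infDist_nonneg) (hsum y) fun i hi => ?_⟩
  exact hct i y (hsupp i ((hfin.point_finite y).mem_toFinset.1 hi))

theorem exists_locallyLipschitz_approx {f : X → E} (hf : Continuous f) {ε : X → ℝ}
    (hε : Continuous ε) (hε_pos : ∀ x, 0 < ε x) :
    ∃ g : X → E, LocallyLipschitz g ∧ ∀ x, dist (g x) (f x) < ε x :=
  exists_locallyLipschitz_forall_mem_convex_of_local_const (t := fun x => Metric.ball (f x) (ε x))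
    (fun x => convex_ball (f x) (ε x)) fun x => ⟨f x,
      (continuous_const.dist hf).continuousAt.eventually_lt hε.continuousAt <| by
        simpa only [dist_self] using hε_pos x⟩

end LocallyLipschitz

section HausdorffDimension

variable {X E : Type*} [NormedAddCommGroup E] [NormedSpace ℝ E]

theorem exists_continuous_norm_lt_ne_of_dimH_lt_finrank [MetricSpace X]
    [SecondCountableTopology X] (hX : dimH (univ : Set X) < finrank ℝ E) {f : X → E}
    (hf : Continuous f) {ε : ℝ} (hε : 0 < ε) :
    ∃ a : X → E, Continuous a ∧ ∀ x, ‖a x‖ < ε ∧ a x ≠ f x := by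
  have : FiniteDimensional ℝ E := .of_finrank_pos (Nat.cast_pos.1 (zero_le.trans_lt hX))
  obtain ⟨g, hg, hgf⟩ := exists_locallyLipschitz_approx hf (ε := fun _ => ε / 2)
    continuous_const fun _ => half_pos hε
  have hdense : Dense (range g)ᶜ :=
    dense_compl_of_dimH_lt_finrank ((dimH_range_le_of_locally_lipschitzOn hg).trans_lt hX)
  obtain ⟨v, hvg, hv⟩ := hdense.exists_dist_lt 0 (half_pos hε)
  refine ⟨fun x => f x - g x + v, (hf.sub hg.continuous).add continuous_const,
    fun x => ⟨?_, fun (h : f x - g x + v = f x) => hvg ⟨x, ?_⟩⟩⟩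
  · calc ‖f x - g x + v‖ ≤ ‖f x - g x‖ + ‖v‖ := norm_add_le _ _
      _ < ε / 2 + ε / 2 := by
        rw [← dist_eq_norm, ← dist_zero_left, dist_comm (f x)]
        exact add_lt_add (hgf x) hv
      _ = ε := add_halves ε
  · rwa [sub_add, sub_eq_self, sub_eq_zero] at h

theorem dimH_le_finrank_vectorSpan (s : Set E) [FiniteDimensional ℝ (vectorSpan ℝ s)] :
    dimH s ≤ finrank ℝ (vectorSpan ℝ s) := by
  rcases s.eq_empty_or_nonempty with rfl | ⟨p, hp⟩
  · simp only [dimH_empty, zero_le]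
  let translate : vectorSpan ℝ s → E := fun v => (v : E) + p
  have hiso : Isometry translate := (isometry_add_right p).comp isometry_subtype_coe
  have hsub : s ⊆ range translate := fun x hx =>
    ⟨⟨x - p, vsub_mem_vectorSpan ℝ hx hp⟩, sub_add_cancel x p⟩
  calc dimH s ≤ dimH (range translate) := dimH_mono hsub
    _ = finrank ℝ (vectorSpan ℝ s) := by
      rw [← image_univ, hiso.dimH_image, Real.dimH_univ_eq_finrank]

theorem dimH_convexHull_finset_le {k : ℕ} {s : Finset E} (hs : s.card ≤ k + 1) :
    dimH (convexHull ℝ (s : Set E)) ≤ k := by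
  classical
  rcases s.eq_empty_or_nonempty with rfl | hne
  · simp
  have hspan : vectorSpan ℝ (convexHull ℝ (s : Set E)) = vectorSpan ℝ (s : Set E) := by
    rw [← direction_affineSpan, affineSpan_convexHull, direction_affineSpan]
  have : FiniteDimensional ℝ (vectorSpan ℝ (convexHull ℝ (s : Set E))) :=
    hspan ▸ finiteDimensional_vectorSpan_of_finite ℝ s.finite_toSet
  have hrank : finrank ℝ (vectorSpan ℝ (s : Set E)) ≤ s.card - 1 := by
    have := finrank_vectorSpan_image_finset_le ℝ (id : E → E) s
      (Nat.sub_add_cancel (Nat.one_le_iff_ne_zero.2 hne.card_ne_zero)).symm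
    rwa [Finset.image_id] at this
  refine (dimH_le_finrank_vectorSpan _).trans ?_
  rw [hspan]
  exact_mod_cast hrank.trans (Nat.sub_le_of_le_add hs)

theorem isSeparable_simplicialComplex_space (K : Geometry.SimplicialComplex ℝ E)
    (hK : K.faces.Countable) : TopologicalSpace.IsSeparable K.space := by
  have := hK.to_subtype
  rw [Geometry.SimplicialComplex.space, biUnion_eq_iUnion]
  exact .iUnion fun s => (s.1.finite_toSet.isCompact_convexHull ℝ).isSeparable

theorem dimH_simplicialComplex_space_le {k : ℕ} (K : Geometry.SimplicialComplex ℝ E)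
    (hK : K.faces.Countable) (hdim : ∀ s ∈ K.faces, s.card ≤ k + 1) : dimH K.space ≤ k := by
  rw [Geometry.SimplicialComplex.space, dimH_bUnion hK]
  exact iSup₂_le fun s hs => dimH_convexHull_finset_le (hdim s hs)

end HausdorffDimension

theorem stmt_10_general {V E : Type*} [NormedAddCommGroup V] [NormedSpace ℝ V]
    [NormedAddCommGroup E] [NormedSpace ℝ E] {k : ℕ}
    (hk : k < finrank ℝ E) (K : Geometry.SimplicialComplex ℝ V) (hK : K.faces.Countable)
    (hdim : ∀ s ∈ K.faces, s.card ≤ k + 1) {f : K.space → E} (hf : Continuous f)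
    {ε : ℝ} (hε : 0 < ε) :
    ∃ a : K.space → E, Continuous a ∧ ∀ x, ‖a x‖ < ε ∧ a x ≠ f x := by
  have := (isSeparable_simplicialComplex_space K hK).separableSpace
  have := UniformSpace.secondCountable_of_separable K.space
  have hX : dimH (univ : Set K.space) < finrank ℝ E := calc
    dimH (univ : Set K.space) = dimH K.space := by
      rw [← isometry_subtype_coe.dimH_image, image_univ, Subtype.range_coe]
    _ ≤ k := dimH_simplicialComplex_space_le K hK hdim
    _ < finrank ℝ E := mod_cast hk
  exact exists_continuous_norm_lt_ne_of_dimH_lt_finrank hX hf hε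

/-- General-position construction from the proof of Deformation Theorem A: if `K` is a
finite simplicial complex of dimension at most `k` in `ℝᴺ` and `f : |K| → ℝ^{k+1}` is
continuous, then for every `ε > 0` there is a continuous map `a : |K| → ℝ^{k+1}` with
`‖a(x)‖ < ε` and `a(x) ≠ f(x)` for every `x`. -/
theorem stmt_10 (k N : ℕ) (hN : 1 ≤ N)
    (K : Geometry.SimplicialComplex ℝ (EuclideanSpace ℝ (Fin N)))
    (hfin : K.faces.Finite)
    (hdim : ∀ s ∈ K.faces, s.card ≤ k + 1)
    (f : K.space → EuclideanSpace ℝ (Fin (k + 1))) (hf : Continuous f) :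
    ∀ ε : ℝ, 0 < ε →
      ∃ a : K.space → EuclideanSpace ℝ (Fin (k + 1)),
        Continuous a ∧ ∀ x : K.space, ‖a x‖ < ε ∧ a x ≠ f x :=
  fun _ hε => stmt_10_general (by simp) K hfin.countable hdim hf hε
end
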